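/- Let n ≥ 3 be odd, m = (n+1)/2, B = e₁ ∈ ℝ^{n+1} and C = e_{m+1}ᵀ. The set of θ ∈ ℝ^n for which the controllability matrix [B, A(θ)B, …, A(θ)ⁿB] fails to be invertible, or the observability matrix with rows C, C A(θ), …, C A(θ)ⁿ fails to be invertible, has Lebesgue measure zero in ℝ^n. (The exchange model with transverse field measured via Y₁ is minimal for almost all parameter values.) -/

import Mathlib

/-!
The observability matrix of `(A, C)` is the transpose of the controllability matrix of `(Aᵀ, Cᵀ)`,
and `A(θ)ᵀ` is `A(θ)` with its two blocks of indices swapped, while `Cᵀ` is `B` with its blocks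
swapped. So observability and controllability are the same condition, the nonvanishing of a
determinant that is real analytic in `θ`. The zeros of such a function are null unless it vanishes
identically, so it suffices to find one `θ` at which the system is controllable.

Take `Ā` to be, up to signs, the adjacency matrix of the path `1 - 2 - ⋯ - m` with a loop at `m`.
The bipartite double cover of this graph is a path on `2m` vertices starting at `e₁`. Ordered along
that path, `A` is tridiagonal with nonzero off-diagonal entries, so `A ^ k e₁` has a nonzero `k`-th
coordinate and zeros beyond it: the controllability matrix is triangular and invertible.
-/

open Matrix

/-- For `n = 2m-1` (odd), the `m×m` symmetric tridiagonal matrix `Ā(θ)` with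
`Ā_{i,i} = θ_{2i-1}` and `Ā_{i,i+1} = Ā_{i+1,i} = -θ_{2i}` (1-indexed). -/
def Abar (m : ℕ) (θ : Fin (2 * m - 1) → ℝ) : Matrix (Fin m) (Fin m) ℝ :=
  Matrix.of fun i j =>
    if i = j then θ ⟨2 * (i : ℕ), by have := i.isLt; omega⟩
    else if h : (i : ℕ) + 1 = (j : ℕ) then -θ ⟨2 * (i : ℕ) + 1, by have := j.isLt; omega⟩
    else if h' : (j : ℕ) + 1 = (i : ℕ) then -θ ⟨2 * (j : ℕ) + 1, by have := i.isLt; omega⟩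
    else 0

/-- The `(n+1)×(n+1)` block matrix `A(θ) = [[0, Ā(θ)], [-Ā(θ), 0]]` (with `n+1 = 2m`,
rows/columns indexed by `Fin m ⊕ Fin m`). -/
def Afull (m : ℕ) (θ : Fin (2 * m - 1) → ℝ) :
    Matrix (Fin m ⊕ Fin m) (Fin m ⊕ Fin m) ℝ :=
  Matrix.fromBlocks 0 (Abar m θ) (-(Abar m θ)) 0

section ZeroSets

open MeasureTheory Filter

variable {E F : Type*} [NormedAddCommGroup E] [NormedSpace ℝ E] [NormedAddCommGroup F]
  [NormedSpace ℝ F]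

theorem ae_ne_zero_of_analyticOnNhd_real (μ : Measure ℝ) [NullSingletonClass μ] {f : ℝ → F}
    (hf : AnalyticOnNhd ℝ f Set.univ) {t₀ : ℝ} (ht₀ : f t₀ ≠ 0) : ∀ᵐ t ∂μ, f t ≠ 0 := by
  rw [← Measure.restrict_univ (μ := μ)]
  refine ae_restrict_le_codiscreteWithin MeasurableSet.univ ?_
  exact (hf.eqOn_zero_or_eventually_ne_zero_of_preconnected isPreconnected_univ).resolve_left
    fun h => ht₀ (h (Set.mem_univ t₀))

variable [FiniteDimensional ℝ E] [MeasurableSpace E] [BorelSpace E]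

/- On every line through `x₀` the zeros of `f` are null, so by Tonelli some dilation
`{x | f (x₀ + t • x) = 0}`, `t ≠ 0`, of the zero set is null. -/
theorem ae_ne_zero_of_analyticOnNhd (μ : Measure E) [μ.IsAddHaarMeasure] {f : E → F}
    (hf : AnalyticOnNhd ℝ f Set.univ) {x₀ : E} (hx₀ : f x₀ ≠ 0) : ∀ᵐ x ∂μ, f x ≠ 0 := by
  have on_lines (x : E) : ∀ᵐ t : ℝ, f (x₀ + t • x) ≠ 0 := by
    have line_analytic : AnalyticOnNhd ℝ (fun t : ℝ => x₀ + t • x) Set.univ :=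
      fun _ _ => by fun_prop
    exact ae_ne_zero_of_analyticOnNhd_real volume
      (hf.comp line_analytic (Set.mapsTo_univ _ _)) (t₀ := 0) (by simpa using hx₀)
  have meas : MeasurableSet {p : E × ℝ | f (x₀ + p.2 • p.1) ≠ 0} := by
    have := hf.continuousOn.comp_continuous
      (show Continuous fun p : E × ℝ => x₀ + p.2 • p.1 by fun_prop) fun _ => Set.mem_univ _
    exact (isOpen_ne_fun this continuous_const).measurableSet
  have on_dilations : ∀ᵐ t : ℝ, ∀ᵐ x ∂μ, f (x₀ + t • x) ≠ 0 :=
    (Measure.ae_ae_comm meas).1 (Eventually.of_forall on_lines)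
  obtain ⟨t, ht, ht₀⟩ := (on_dilations.and (Measure.ae_ne volume 0)).exists
  have null : μ ((t • ·) ⁻¹' ((x₀ + ·) ⁻¹' {x | ¬ f x ≠ 0})) = 0 := ae_iff.1 ht
  rw [Measure.addHaar_preimage_smul μ ht₀, measure_preimage_add, mul_eq_zero] at null
  exact ae_iff.2 (null.resolve_left (by simp [ht₀]))

end ZeroSets

section AnalyticMatrices

variable {𝕜 E n : Type*} [NontriviallyNormedField 𝕜] [NormedAddCommGroup E] [NormedSpace 𝕜 E]
  [Fintype n] [DecidableEq n] {M : E → Matrix n n 𝕜} {x : E}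

theorem analyticAt_matrix_pow_apply (hM : ∀ i j, AnalyticAt 𝕜 (fun y => M y i j) x) (k : ℕ)
    (i j : n) : AnalyticAt 𝕜 (fun y => (M y ^ k) i j) x := by
  induction k generalizing i j with
  | zero => simpa only [pow_zero] using analyticAt_const
  | succ k ih =>
    simp only [pow_succ, Matrix.mul_apply]
    fun_prop

theorem analyticAt_matrix_det (hM : ∀ i j, AnalyticAt 𝕜 (fun y => M y i j) x) :
    AnalyticAt 𝕜 (fun y => (M y).det) x := by
  simp only [Matrix.det_apply']
  fun_prop

end AnalyticMatrices

section ControllabilityMatrix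

variable {n κ R : Type*} [Fintype n] [DecidableEq n]

/-- The matrix with columns `A ^ k b`, where column `c` carries the exponent `k = e c`. The columns
are indexed by an arbitrary type so that they may be labelled by the state space itself. -/
def controllabilityMatrix [Semiring R] (A : Matrix n n R) (b : n → R) (e : κ → ℕ) :
    Matrix n κ R :=
  Matrix.of fun i c => ((A ^ e c) *ᵥ b) i

/-- The matrix with rows `c A ^ k`, where row `r` carries the exponent `k = e r`. -/
def observabilityMatrix [Semiring R] (A : Matrix n n R) (c : n → R) (e : κ → ℕ) :
    Matrix κ n R :=
  Matrix.of fun r i => (c ᵥ* (A ^ e r)) i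

theorem observabilityMatrix_eq_transpose_controllabilityMatrix [CommSemiring R]
    (A : Matrix n n R) (c : n → R) (e : κ → ℕ) :
    observabilityMatrix A c e = (controllabilityMatrix Aᵀ c e)ᵀ := by
  ext r i
  simp only [observabilityMatrix, controllabilityMatrix, Matrix.of_apply, Matrix.transpose_apply,
    ← Matrix.transpose_pow, Matrix.mulVec_transpose]

theorem controllabilityMatrix_submatrix [CommSemiring R] {n' : Type*} [Fintype n']
    [DecidableEq n'] (A : Matrix n n R) (b : n → R) (σ : n' ≃ n) (e : κ → ℕ) :
    controllabilityMatrix (A.submatrix σ σ) (b ∘ σ) e =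
      (controllabilityMatrix A b e).submatrix σ id := by
  have submatrix_pow (k : ℕ) : A.submatrix σ σ ^ k = (A ^ k).submatrix σ σ :=
    (map_pow (Matrix.reindexAlgEquiv R R σ.symm) A k).symm
  ext i c
  simp [controllabilityMatrix, submatrix_pow, Matrix.submatrix_mulVec_equiv, Function.comp_assoc]

theorem isUnit_observabilityMatrix_iff_of_transpose_eq_submatrix [CommRing R]
    {A : Matrix n n R} {σ : n ≃ n} (hA : Aᵀ = A.submatrix σ σ) (b : n → R) (e : n → ℕ) :
    IsUnit (observabilityMatrix A (b ∘ σ) e) ↔ IsUnit (controllabilityMatrix A b e) := by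
  rw [observabilityMatrix_eq_transpose_controllabilityMatrix, Matrix.isUnit_transpose, hA,
    controllabilityMatrix_submatrix]
  exact Matrix.isUnit_submatrix_equiv σ (Equiv.refl n)

theorem analyticAt_controllabilityMatrix_apply {𝕜 E : Type*} [NontriviallyNormedField 𝕜]
    [NormedAddCommGroup E] [NormedSpace 𝕜 E] {M : E → Matrix n n 𝕜} {x : E}
    (hM : ∀ i j, AnalyticAt 𝕜 (fun y => M y i j) x) (b : n → 𝕜) (e : κ → ℕ) (i : n) (c : κ) :
    AnalyticAt 𝕜 (fun y => controllabilityMatrix (M y) b e i c) x := by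
  have := analyticAt_matrix_pow_apply hM (e c) i
  simp only [controllabilityMatrix, Matrix.of_apply, Matrix.mulVec, dotProduct]
  fun_prop

end ControllabilityMatrix

section Hessenberg

variable {n R : Type*} {N : ℕ}

/-- `A` is an unreduced upper Hessenberg matrix for the ordering `r` of its indices: it vanishes
below the first subdiagonal, and the subdiagonal entries are units. -/
structure IsUnreducedHessenberg [Semiring R] (A : Matrix n n R) (r : n ≃ Fin N) : Prop where
  eq_zero : ∀ i j, (r j : ℕ) + 1 < r i → A i j = 0
  isUnit : ∀ i j, (r j : ℕ) + 1 = r i → IsUnit (A i j)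

namespace IsUnreducedHessenberg

variable [Fintype n] [DecidableEq n] {r : n ≃ Fin N} {i₀ : n}

theorem pow_mulVec_single_eq_zero [Semiring R] {A : Matrix n n R}
    (hA : IsUnreducedHessenberg A r) (hi₀ : (r i₀ : ℕ) = 0) {k : ℕ} {i : n} (hk : k < r i) :
    ((A ^ k) *ᵥ Pi.single i₀ 1) i = 0 := by
  induction k generalizing i with
  | zero =>
    rw [pow_zero, Matrix.one_mulVec, Pi.single_eq_of_ne]
    rintro rfl
    exact hk.ne' hi₀
  | succ k ih =>
    rw [pow_succ', ← Matrix.mulVec_mulVec]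
    refine Finset.sum_eq_zero fun j _ => ?_
    rcases lt_or_ge k (r j : ℕ) with hj | hj
    · exact mul_eq_zero_of_right _ (ih hj)
    · exact mul_eq_zero_of_left (hA.eq_zero i j (by omega)) _

theorem isUnit_pow_mulVec_single [Semiring R] {A : Matrix n n R}
    (hA : IsUnreducedHessenberg A r) (hi₀ : (r i₀ : ℕ) = 0) {k : ℕ} {i : n} (hk : r i = k) :
    IsUnit (((A ^ k) *ᵥ Pi.single i₀ 1) i) := by
  induction k generalizing i with
  | zero =>
    obtain rfl : i = i₀ := r.injective (Fin.ext (hk.trans hi₀.symm))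
    simp
  | succ k ih =>
    obtain ⟨j, hj⟩ : ∃ j, (r j : ℕ) = k := ⟨r.symm ⟨k, by omega⟩, by simp⟩
    have only_j : (A *ᵥ ((A ^ k) *ᵥ Pi.single i₀ 1)) i =
        A i j * ((A ^ k) *ᵥ Pi.single i₀ 1) j := by
      refine Finset.sum_eq_single_of_mem j (Finset.mem_univ j) fun l _ hl => ?_
      have hlk : (r l : ℕ) ≠ k := fun h => hl (r.injective (Fin.ext (h.trans hj.symm)))
      rcases hlk.lt_or_gt with h | h
      · exact mul_eq_zero_of_left (hA.eq_zero i l (by omega)) _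
      · exact mul_eq_zero_of_right _ (hA.pow_mulVec_single_eq_zero hi₀ h)
    rw [pow_succ', ← Matrix.mulVec_mulVec, only_j]
    exact (hA.isUnit i j (by omega)).mul (ih hj)

theorem isUnit_controllabilityMatrix [CommRing R] {A : Matrix n n R}
    (hA : IsUnreducedHessenberg A r) (hi₀ : (r i₀ : ℕ) = 0) (e : n ≃ Fin N) :
    IsUnit (controllabilityMatrix A (Pi.single i₀ 1) fun c => (e c : ℕ)) := by
  rw [← Matrix.isUnit_submatrix_equiv r.symm e.symm, Matrix.isUnit_iff_isUnit_det,
    Matrix.det_of_isUpperTriangular, IsUnit.prod_univ_iff]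
  · intro i
    simpa [controllabilityMatrix] using hA.isUnit_pow_mulVec_single hi₀ (i := r.symm i) (by simp)
  · intro i j hij
    simpa [controllabilityMatrix] using
      hA.pow_mulVec_single_eq_zero hi₀ (i := r.symm i) (by simpa using hij)

end IsUnreducedHessenberg

end Hessenberg

section ExchangeModel

variable {m : ℕ}

theorem transpose_Abar (θ : Fin (2 * m - 1) → ℝ) : (Abar m θ)ᵀ = Abar m θ := by
  ext i j
  simp only [Abar, Matrix.transpose_apply, Matrix.of_apply, Fin.ext_iff]
  grind

theorem transpose_Afull (θ : Fin (2 * m - 1) → ℝ) :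
    (Afull m θ)ᵀ = (Afull m θ).submatrix (Equiv.sumComm _ _) (Equiv.sumComm _ _) := by
  simp [Afull, Matrix.fromBlocks_transpose, transpose_Abar]

theorem analyticAt_Abar_apply (i j : Fin m) (θ : Fin (2 * m - 1) → ℝ) :
    AnalyticAt ℝ (fun θ => Abar m θ i j) θ := by
  have coord (k : Fin (2 * m - 1)) : AnalyticAt ℝ (fun θ : Fin (2 * m - 1) → ℝ => θ k) θ :=
    (ContinuousLinearMap.proj (R := ℝ) k).analyticAt θ
  simp only [Abar, Matrix.of_apply]
  split_ifs
  exacts [coord _, (coord _).neg, (coord _).neg, analyticAt_const]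

theorem analyticAt_Afull_apply (i j : Fin m ⊕ Fin m) (θ : Fin (2 * m - 1) → ℝ) :
    AnalyticAt ℝ (fun θ => Afull m θ i j) θ := by
  rcases i with i | i <;> rcases j with j | j
  · exact analyticAt_const
  · exact analyticAt_Abar_apply i j θ
  · exact (analyticAt_Abar_apply i j θ).neg
  · exact analyticAt_const

/-- The parameter at which `Ā` is, up to the sign of its off-diagonal entries, the adjacency matrix
of a path with a loop at its last vertex. -/
def loopedPathParam (m : ℕ) : Fin (2 * m - 1) → ℝ :=
  fun k => if (k : ℕ) % 2 = 1 ∨ (k : ℕ) + 2 = 2 * m then 1 else 0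

theorem Abar_loopedPathParam_apply (i j : Fin m) :
    Abar m (loopedPathParam m) i j =
      if (i : ℕ) + 1 = j ∨ (j : ℕ) + 1 = i then -1
      else if i = j ∧ (i : ℕ) + 1 = m then 1 else 0 := by
  simp only [Abar, loopedPathParam, Matrix.of_apply, Fin.ext_iff]
  grind

/-- The position of a vertex of the bipartite double cover of the looped path, which is itself a
path: it runs through `inl 0, inr 1, inl 2, …` up to the loop, crosses to the other copy of the last
vertex there, and returns through `…, inr 2, inl 1, inr 0`. -/
def doubleCoverRank : Fin m ⊕ Fin m → Fin (m + m)
  | .inl i => if (i : ℕ) % 2 = 0 then ⟨i, by omega⟩ else ⟨2 * m - 1 - i, by omega⟩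
  | .inr i => if (i : ℕ) % 2 = 1 then ⟨i, by omega⟩ else ⟨2 * m - 1 - i, by omega⟩

theorem doubleCoverRank_injective : Function.Injective (doubleCoverRank (m := m)) := by
  rintro (i | i) (j | j) h <;> grind [doubleCoverRank]

theorem doubleCoverRank_bijective : Function.Bijective (doubleCoverRank (m := m)) :=
  (Fintype.bijective_iff_injective_and_card _).2 ⟨doubleCoverRank_injective, by simp⟩

theorem Afull_loopedPathParam_apply_ne_zero_iff (x y : Fin m ⊕ Fin m) :
    Afull m (loopedPathParam m) x y ≠ 0 ↔
      (doubleCoverRank x : ℕ) + 1 = doubleCoverRank y ∨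
        (doubleCoverRank y : ℕ) + 1 = doubleCoverRank x := by
  rcases x with i | i <;> rcases y with j | j <;>
    simp only [Afull, doubleCoverRank, Abar_loopedPathParam_apply, Matrix.fromBlocks_apply₁₁,
      Matrix.fromBlocks_apply₁₂, Matrix.fromBlocks_apply₂₁, Matrix.fromBlocks_apply₂₂,
      Matrix.zero_apply, Matrix.neg_apply] <;>
    grind

theorem isUnreducedHessenberg_Afull_loopedPathParam :
    IsUnreducedHessenberg (Afull m (loopedPathParam m))
      (Equiv.ofBijective doubleCoverRank doubleCoverRank_bijective) where
  eq_zero x y h := by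
    rw [Equiv.ofBijective_apply, Equiv.ofBijective_apply] at h
    by_contra hne
    have := (Afull_loopedPathParam_apply_ne_zero_iff x y).1 hne
    omega
  isUnit x y h := ((Afull_loopedPathParam_apply_ne_zero_iff x y).2 (Or.inr h)).isUnit

theorem isUnit_observabilityMatrix_Afull_iff (hm : 0 < m) (θ : Fin (2 * m - 1) → ℝ)
    (e : Fin m ⊕ Fin m → ℕ) :
    IsUnit (observabilityMatrix (Afull m θ) (Pi.single (Sum.inr ⟨0, hm⟩) 1) e) ↔
      IsUnit (controllabilityMatrix (Afull m θ) (Pi.single (Sum.inl ⟨0, hm⟩) 1) e) := by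
  rw [← isUnit_observabilityMatrix_iff_of_transpose_eq_submatrix (transpose_Afull θ),
    Pi.single_comp_equiv]
  rfl

theorem ae_isUnit_controllabilityMatrix_Afull (hm : 0 < m) (e : Fin m ⊕ Fin m ≃ Fin (m + m)) :
    ∀ᵐ θ, IsUnit (controllabilityMatrix (Afull m θ) (Pi.single (Sum.inl ⟨0, hm⟩) 1)
      fun c => (e c : ℕ)) := by
  simp only [Matrix.isUnit_iff_isUnit_det, isUnit_iff_ne_zero]
  refine ae_ne_zero_of_analyticOnNhd _ (fun θ _ => analyticAt_matrix_det fun i j =>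
    analyticAt_controllabilityMatrix_apply (analyticAt_Afull_apply · · θ) _ _ i j)
    (x₀ := loopedPathParam m) ?_
  rw [← isUnit_iff_ne_zero, ← Matrix.isUnit_iff_isUnit_det]
  exact isUnreducedHessenberg_Afull_loopedPathParam.isUnit_controllabilityMatrix
    (by simp [doubleCoverRank]) e

end ExchangeModel

/-- With `B = e₁` and `C = e_{m+1}ᵀ`, the set of parameters `θ` for which the
controllability matrix `[B, A(θ)B, …, A(θ)ⁿB]` or the observability matrix (with rows
`C, C A(θ), …, C A(θ)ⁿ`) fails to be invertible has Lebesgue measure zero: the exchange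
model with transverse field measured via `Y₁` is minimal for almost all parameters. -/
theorem stmt9 (m : ℕ) (hm : 2 ≤ m) :
    MeasureTheory.volume {θ : Fin (2 * m - 1) → ℝ |
      ¬ IsUnit (Matrix.of fun i k : Fin m ⊕ Fin m =>
          (Afull m θ ^ ((finSumFinEquiv k : Fin (m + m)) : ℕ)).mulVec
            (Pi.single (Sum.inl (⟨0, by omega⟩ : Fin m)) 1) i) ∨
      ¬ IsUnit (Matrix.of fun k i : Fin m ⊕ Fin m =>
          Matrix.vecMul (Pi.single (Sum.inr (⟨0, by omega⟩ : Fin m)) 1)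
            (Afull m θ ^ ((finSumFinEquiv k : Fin (m + m)) : ℕ)) i)} = 0 := by
  have hm₀ : 0 < m := by omega
  have controllable := ae_isUnit_controllabilityMatrix_Afull hm₀ finSumFinEquiv
  refine MeasureTheory.measure_mono_null ?_ (MeasureTheory.ae_iff.1 controllable)
  rintro θ (not_controllable | not_observable)
  · exact not_controllable
  · exact mt (isUnit_observabilityMatrix_Afull_iff hm₀ θ _).2 not_observable
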